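/- For ψ ∈ (π/4, 3π/4) set C = C(ψ) = arccos(−cot ψ), so that C → 0⁺ as ψ → (3π/4)⁻. Then, as ψ → (3π/4)⁻: 𝓕₁²(ψ)/𝓕₀²(ψ) = 1 − C²/14 + O(C⁴); ( 𝓕₀²(ψ) + 𝓕₂²(ψ) ) / ( 2 𝓕₀²(ψ) ) = 1 − C²/7 + O(C⁴); ( 𝓕₀¹(ψ) + 𝓕₂¹(ψ) ) / ( 2 √(2 𝓕₀²(ψ)) ) = (√5/√(6π)) C^{1/2} + O(C^{5/2}); and ( 𝓕₀¹(ψ) − 𝓕₂¹(ψ) ) / ( 2 √(2 𝓕₀²(ψ)) ) = (1/√(30π)) C^{5/2} + O(C^{9/2}). -/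

import Mathlib

open MeasureTheory Set Filter Asymptotics

/-- `C(ψ) = π` for `0 ≤ ψ ≤ π/4`, `C(ψ) = arccos(-cot ψ)` for `π/4 < ψ < 3π/4`. -/
noncomputable def Cpsi (ψ : ℝ) : ℝ :=
  if ψ ≤ Real.pi / 4 then Real.pi else Real.arccos (-(Real.cos ψ / Real.sin ψ))

/-- `𝓕_N^s(ψ) = (1/(πΓ(s+1))) ∫₀^{C(ψ)} cos(Nθ)(cos ψ + sin ψ cos θ)^s dθ`. -/
noncomputable def calF (N : ℕ) (s ψ : ℝ) : ℝ :=
  (1 / (Real.pi * Real.Gamma (s + 1))) *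
    ∫ θ in (0 : ℝ)..Cpsi ψ, Real.cos (N * θ) * (Real.cos ψ + Real.sin ψ * Real.cos θ) ^ s

/-- `u(ψ) = 𝓕₁²(ψ)/𝓕₀²(ψ)`. -/
noncomputable def uFun (ψ : ℝ) : ℝ := calF 1 2 ψ / calF 0 2 ψ

/-- `Y(ψ) = (𝓕₀²(ψ)+𝓕₂²(ψ))/(2𝓕₀²(ψ))`. -/
noncomputable def Yfun (ψ : ℝ) : ℝ := (calF 0 2 ψ + calF 2 2 ψ) / (2 * calF 0 2 ψ)

/-- `Z(ψ) = (𝓕₀¹(ψ)-𝓕₂¹(ψ))/(2√(2𝓕₀²(ψ)))`. -/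
noncomputable def Zfun (ψ : ℝ) : ℝ :=
  (calF 0 1 ψ - calF 2 1 ψ) / (2 * Real.sqrt (2 * calF 0 2 ψ))

/-- `Z_⊥(ψ) = (𝓕₀¹(ψ)+𝓕₂¹(ψ))/(2√(2𝓕₀²(ψ)))`. -/
noncomputable def Zperp (ψ : ℝ) : ℝ :=
  (calF 0 1 ψ + calF 2 1 ψ) / (2 * Real.sqrt (2 * calF 0 2 ψ))


section helpers

/-- integral bound -/
lemma aux_int (f p : ℝ → ℝ) (hf : Continuous f) (hp : Continuous p) (K C : ℝ) (n : ℕ) (hC : 0 < C)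
    (h : ∀ θ, 0 ≤ θ → θ ≤ C → |f θ - p θ| ≤ K * C ^ n) :
    |(∫ θ in (0:ℝ)..C, f θ) - ∫ θ in (0:ℝ)..C, p θ| ≤ K * C ^ (n + 1) := by
  rw [← intervalIntegral.integral_sub (hf.intervalIntegrable _ _) (hp.intervalIntegrable _ _)]
  have := intervalIntegral.norm_integral_le_of_norm_le_const (a := 0) (b := C)
    (f := fun θ => f θ - p θ) (C := K * C ^ n) (by
      intro x hx
      rw [uIoc_of_le hC.le] at hx
      exact h x hx.1.le hx.2)
  rw [Real.norm_eq_abs, sub_zero, abs_of_pos hC] at this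
  calc _ ≤ _ := this
    _ = _ := by ring

/-- normalised asymptotics -/
lemma aux_norm (F : ℝ → ℝ → ℝ) (p : ℝ → ℝ → ℝ) (hF : ∀ C, Continuous (F C))
    (hp : ∀ C, Continuous (p C)) (c K : ℝ) (n : ℕ)
    (hpi : ∀ C, ∫ θ in (0:ℝ)..C, p C θ = c * C ^ (n + 1))
    (h : ∀ C θ, 0 < C → C ≤ 1 → 0 ≤ θ → θ ≤ C → |F C θ - p C θ| ≤ K * C ^ (n + 2)) :
    (fun C => (∫ θ in (0:ℝ)..C, F C θ) / C ^ (n + 1) - c)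
      =O[nhdsWithin 0 (Ioi 0)] fun C => C ^ 2 := by
  refine IsBigO.of_bound K ?_
  have h1 : Ioo (0:ℝ) 1 ∈ nhdsWithin (0:ℝ) (Ioi 0) := Ioo_mem_nhdsGT one_pos
  filter_upwards [h1] with C hC
  have hC0 : 0 < C := hC.1
  have := aux_int (F C) (p C) (hF C) (hp C) K C (n + 2) hC0
    (fun θ h0 h1 => h C θ hC0 hC.2.le h0 h1)
  rw [hpi] at this
  have e : (∫ θ in (0:ℝ)..C, F C θ) / C ^ (n + 1) - c
      = ((∫ θ in (0:ℝ)..C, F C θ) - c * C ^ (n + 1)) / C ^ (n + 1) := by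
    field_simp
  rw [e, Real.norm_eq_abs, Real.norm_eq_abs, abs_div, abs_of_pos (pow_pos hC0 (n + 1)),
    abs_of_pos (pow_pos hC0 2), div_le_iff₀ (pow_pos hC0 _)]
  calc _ ≤ _ := this
    _ = _ := by ring

lemma aux_mul {l : Filter ℝ} (f g : ℝ → ℝ) (f0 g0 : ℝ) (φ : ℝ → ℝ) (hl : l ≤ nhds 0)
    (hf : (fun C => f C - f0) =O[l] fun C : ℝ => C ^ 2)
    (hg : (fun C => g C - g0) =O[l] fun C : ℝ => C ^ 2)
    (hφ : DifferentiableAt ℝ φ g0) :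
    (fun C => f C * φ (g C) - f0 * φ g0) =O[l] fun C : ℝ => C ^ 2 := by
  have hsq : Tendsto (fun C : ℝ => C ^ 2) l (nhds 0) := by
    have : Tendsto (fun C : ℝ => C ^ 2) (nhds 0) (nhds 0) := by
      have := (continuous_pow 2 : Continuous (fun C : ℝ => C ^ 2)).tendsto 0
      simpa using this
    exact this.mono_left hl
  have hgt : Tendsto g l (nhds g0) := by
    have := (hg.trans_tendsto hsq).add_const g0
    simpa using this
  have h1 : (fun C => φ (g C) - φ g0) =O[l] fun C : ℝ => C ^ 2 :=
    (hφ.isBigO_sub.comp_tendsto hgt).trans hg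
  have h2 : (fun C => φ (g C)) =O[l] fun _ => (1:ℝ) :=
    (hφ.continuousAt.tendsto.comp hgt).isBigO_one ℝ
  have h3 := hf.mul h2
  simp only [mul_one] at h3
  have h4 := h3.add (h1.const_mul_left f0)
  refine h4.congr_left fun C => ?_
  ring

lemma cosb (x C : ℝ) (h0 : 0 ≤ x) (h1 : x ≤ C) (hC : C ≤ 1) :
    |1 - Real.cos x - x ^ 2 / 2| ≤ C ^ 4 / 16 := by
  have := Real.cos_bound (x := x) (by rw [abs_of_nonneg h0]; linarith)
  rw [abs_of_nonneg h0] at this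
  have h4 : x ^ 4 ≤ C ^ 4 := by gcongr
  have h5 : 0 ≤ x ^ 4 := by positivity
  rw [abs_le] at this ⊢
  constructor <;> nlinarith

lemma mulb (a b a' b' A B E F : ℝ) (ha : |a| ≤ A) (hb : |b'| ≤ B) (h1 : |a - a'| ≤ E)
    (h2 : |b - b'| ≤ F) : |a * b - a' * b'| ≤ A * F + E * B := by
  have : a * b - a' * b' = a * (b - b') + (a - a') * b' := by ring
  rw [this]
  refine (abs_add_le _ _).trans ?_
  rw [abs_mul, abs_mul]
  gcongr
  · exact (abs_nonneg _).trans ha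
  · exact (abs_nonneg _).trans h1

lemma wb (C θ : ℝ) (hC0 : 0 < C) (hC : C ≤ 1) (h0 : 0 ≤ θ) (h1 : θ ≤ C) :
    |(Real.cos θ - Real.cos C) - (C ^ 2 - θ ^ 2) / 2| ≤ C ^ 4 ∧
    |Real.cos θ - Real.cos C| ≤ C ^ 2 ∧ |(C ^ 2 - θ ^ 2) / 2| ≤ C ^ 2 ∧
    |1 - Real.cos θ| ≤ C ^ 2 ∧ |θ ^ 2 / 2| ≤ C ^ 2 ∧
    |(1 - Real.cos θ) - θ ^ 2 / 2| ≤ C ^ 4 ∧ 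
    |Real.sin θ ^ 2 - θ ^ 2| ≤ 2 * C ^ 4 ∧ |Real.sin θ ^ 2| ≤ C ^ 2 ∧ |θ ^ 2| ≤ C ^ 2 ∧
    |Real.cos θ ^ 2 - 1| ≤ C ^ 2 := by
  have e1 := abs_le.1 (cosb θ C h0 h1 hC)
  have e2 := abs_le.1 (cosb C C hC0.le le_rfl hC)
  have hsq : θ ^ 2 ≤ C ^ 2 := by gcongr
  have h4 : 0 < C ^ 4 := by positivity
  have h42 : C ^ 4 ≤ C ^ 2 := pow_le_pow_of_le_one hC0.le hC (by norm_num)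
  have hθ : 0 ≤ θ ^ 2 := sq_nonneg _
  have hq0 : 0 ≤ 1 - Real.cos θ := by linarith [Real.cos_le_one θ]
  have hq1 : 1 - Real.cos θ ≤ C ^ 2 := by linarith
  have hq2 : (1 - Real.cos θ) ^ 2 ≤ C ^ 4 := by
    calc (1 - Real.cos θ) ^ 2 ≤ (C ^ 2) ^ 2 := by gcongr
      _ = C ^ 4 := by ring
  have hq3 := sq_nonneg (1 - Real.cos θ)
  have hs : Real.sin θ ^ 2 = 2 * (1 - Real.cos θ) - (1 - Real.cos θ) ^ 2 := by
    rw [Real.sin_sq]; ring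
  have hs1 : Real.sin θ ^ 2 ≤ C ^ 2 := by
    have : Real.sin θ ≤ θ := Real.sin_le h0
    have h' : 0 ≤ Real.sin θ := Real.sin_nonneg_of_nonneg_of_le_pi h0 (by linarith [Real.pi_gt_three])
    calc Real.sin θ ^ 2 ≤ θ ^ 2 := by gcongr
      _ ≤ _ := hsq
  have hs0 := sq_nonneg (Real.sin θ)
  have hcs := Real.sin_sq_add_cos_sq θ
  refine ⟨?_, ?_, ?_, ?_, ?_, ?_, ?_, ?_, ?_, ?_⟩ <;> rw [abs_le] <;> constructor <;> linarith

lemma w2b (C θ : ℝ) (hC0 : 0 < C) (hC : C ≤ 1) (h0 : 0 ≤ θ) (h1 : θ ≤ C) :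
    |(Real.cos θ - Real.cos C) ^ 2 - ((C ^ 2 - θ ^ 2) / 2) ^ 2| ≤ 2 * C ^ 6 ∧
    |(Real.cos θ - Real.cos C) ^ 2| ≤ C ^ 4 ∧ |((C ^ 2 - θ ^ 2) / 2) ^ 2| ≤ C ^ 4 := by
  obtain ⟨a, b, c, -⟩ := wb C θ hC0 hC h0 h1
  refine ⟨?_, ?_, ?_⟩
  · have := mulb _ _ _ _ _ _ _ _ b c a a
    rw [sq, sq]; linarith
  · rw [abs_pow]
    calc _ ≤ (C ^ 2) ^ 2 := by gcongr
      _ = C ^ 4 := by ring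
  · rw [abs_pow]
    calc _ ≤ (C ^ 2) ^ 2 := by gcongr
      _ = C ^ 4 := by ring

lemma int_even (C a b c d : ℝ) : ∫ θ in (0:ℝ)..C, (a + b * θ ^ 2 + c * θ ^ 4 + d * θ ^ 6)
    = a * C + b * C ^ 3 / 3 + c * C ^ 5 / 5 + d * C ^ 7 / 7 := by
  rw [intervalIntegral.integral_add, intervalIntegral.integral_add, intervalIntegral.integral_add]
  · simp only [intervalIntegral.integral_const_mul, integral_pow, intervalIntegral.integral_const]
    norm_num
    ring
  all_goals exact Continuous.intervalIntegrable (by fun_prop) _ _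

lemma asI : (fun C => (∫ θ in (0:ℝ)..C, (Real.cos θ - Real.cos C) ^ 2) / C ^ 5 - 2 / 15)
      =O[nhdsWithin 0 (Ioi 0)] fun C => C ^ 2 := by
  refine aux_norm (fun C θ => (Real.cos θ - Real.cos C) ^ 2)
    (fun C θ => ((C ^ 2 - θ ^ 2) / 2) ^ 2) (fun C => by fun_prop) (fun C => by fun_prop) _ 2 4 ?_ ?_
  · intro C
    rw [show (fun θ : ℝ => ((C ^ 2 - θ ^ 2) / 2) ^ 2) = fun θ => C ^ 4 / 4 + (- C ^ 2 / 2) * θ ^ 2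
      + (1 / 4) * θ ^ 4 + 0 * θ ^ 6 by ext θ; ring, int_even]
    ring
  · intro C θ a b c d
    exact (w2b C θ a b c d).1

lemma asA : (fun C => (∫ θ in (0:ℝ)..C, (1 - Real.cos θ) * (Real.cos θ - Real.cos C) ^ 2) / C ^ 7
      - 1 / 105) =O[nhdsWithin 0 (Ioi 0)] fun C => C ^ 2 := by
  refine aux_norm (fun C θ => (1 - Real.cos θ) * (Real.cos θ - Real.cos C) ^ 2)
    (fun C θ => (θ ^ 2 / 2) * ((C ^ 2 - θ ^ 2) / 2) ^ 2) (fun C => by fun_prop)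
    (fun C => by fun_prop) _ 3 6 ?_ ?_
  · intro C
    rw [show (fun θ : ℝ => (θ ^ 2 / 2) * ((C ^ 2 - θ ^ 2) / 2) ^ 2) =
      fun θ => 0 + (C ^ 4 / 8) * θ ^ 2
      + (- C ^ 2 / 4) * θ ^ 4 + (1 / 8) * θ ^ 6 by ext θ; ring, int_even]
    ring
  · intro C θ a b c d
    obtain ⟨h1, h2, h3⟩ := w2b C θ a b c d
    obtain ⟨-, -, -, k1, k2, k3, -⟩ := wb C θ a b c d
    refine (mulb _ _ _ _ _ _ _ _ k1 h3 k3 h1).trans (le_of_eq ?_)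
    ring

lemma asB : (fun C => (∫ θ in (0:ℝ)..C, Real.sin θ ^ 2 * (Real.cos θ - Real.cos C) ^ 2) / C ^ 7
      - 2 / 105) =O[nhdsWithin 0 (Ioi 0)] fun C => C ^ 2 := by
  refine aux_norm (fun C θ => Real.sin θ ^ 2 * (Real.cos θ - Real.cos C) ^ 2)
    (fun C θ => θ ^ 2 * ((C ^ 2 - θ ^ 2) / 2) ^ 2) (fun C => by fun_prop)
    (fun C => by fun_prop) _ 4 6 ?_ ?_
  · intro C
    rw [show (fun θ : ℝ => θ ^ 2 * ((C ^ 2 - θ ^ 2) / 2) ^ 2) =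
      fun θ => 0 + (C ^ 4 / 4) * θ ^ 2
      + (- C ^ 2 / 2) * θ ^ 4 + (1 / 4) * θ ^ 6 by ext θ; ring, int_even]
    ring
  · intro C θ a b c d
    obtain ⟨h1, h2, h3⟩ := w2b C θ a b c d
    obtain ⟨-, -, -, -, -, -, k3, k1, k2, -⟩ := wb C θ a b c d
    refine (mulb _ _ _ _ _ _ _ _ k1 h3 k3 h1).trans (le_of_eq ?_)
    ring

lemma asE : (fun C => (∫ θ in (0:ℝ)..C, Real.sin θ ^ 2 * (Real.cos θ - Real.cos C)) / C ^ 5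
      - 1 / 15) =O[nhdsWithin 0 (Ioi 0)] fun C => C ^ 2 := by
  refine aux_norm (fun C θ => Real.sin θ ^ 2 * (Real.cos θ - Real.cos C))
    (fun C θ => θ ^ 2 * ((C ^ 2 - θ ^ 2) / 2)) (fun C => by fun_prop)
    (fun C => by fun_prop) _ 3 4 ?_ ?_
  · intro C
    rw [show (fun θ : ℝ => θ ^ 2 * ((C ^ 2 - θ ^ 2) / 2)) =
      fun θ => 0 + (C ^ 2 / 2) * θ ^ 2
      + (- 1 / 2) * θ ^ 4 + 0 * θ ^ 6 by ext θ; ring, int_even]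
    ring
  · intro C θ a b c d
    obtain ⟨h1, h2, h3, -, -, -, k3, k1, k2, -⟩ := wb C θ a b c d
    refine (mulb _ _ _ _ _ _ _ _ k1 h3 k3 h1).trans (le_of_eq ?_)
    ring

lemma asD : (fun C => (∫ θ in (0:ℝ)..C, Real.cos θ ^ 2 * (Real.cos θ - Real.cos C)) / C ^ 3
      - 1 / 3) =O[nhdsWithin 0 (Ioi 0)] fun C => C ^ 2 := by
  refine aux_norm (fun C θ => Real.cos θ ^ 2 * (Real.cos θ - Real.cos C))
    (fun C θ => 1 * ((C ^ 2 - θ ^ 2) / 2)) (fun C => by fun_prop)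
    (fun C => by fun_prop) _ 2 2 ?_ ?_
  · intro C
    rw [show (fun θ : ℝ => 1 * ((C ^ 2 - θ ^ 2) / 2)) =
      fun θ => C ^ 2 / 2 + (- 1 / 2) * θ ^ 2
      + 0 * θ ^ 4 + 0 * θ ^ 6 by ext θ; ring, int_even]
    ring
  · intro C θ a b c d
    obtain ⟨h1, h2, h3, -, -, -, -, -, -, k3⟩ := wb C θ a b c d
    have k1 : |Real.cos θ ^ 2| ≤ 1 := by
      rw [abs_pow, sq_abs]; exact Real.cos_sq_le_one θ
    refine (mulb _ _ _ _ _ _ _ _ k1 h3 k3 h1).trans (le_of_eq ?_)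
    ring

lemma psi_facts (ψ : ℝ) (h1 : Real.pi / 2 < ψ) (h2 : ψ < 3 * Real.pi / 4) :
    0 < Real.sin ψ ∧ 0 < Cpsi ψ ∧ Real.cos ψ = - Real.sin ψ * Real.cos (Cpsi ψ) := by
  have hpi := Real.pi_pos
  have hs : 0 < Real.sin ψ := Real.sin_pos_of_pos_of_lt_pi (by linarith) (by linarith)
  have hc : Real.cos ψ < 0 := Real.cos_neg_of_pi_div_two_lt_of_lt h1 (by linarith)
  have hlt : -Real.cos ψ < Real.sin ψ := by
    have a := Real.sin_sub_pi_div_two ψ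
    have : Real.sin (ψ - Real.pi / 2) < Real.sin (Real.pi - ψ) :=
      Real.sin_lt_sin_of_lt_of_le_pi_div_two (by linarith) (by linarith) (by linarith)
    rw [a, Real.sin_pi_sub] at this
    exact this
  have e : Cpsi ψ = Real.arccos (-(Real.cos ψ / Real.sin ψ)) := by
    rw [Cpsi, if_neg (by linarith)]
  have k1 : -(Real.cos ψ / Real.sin ψ) < 1 := by
    rw [← neg_div, div_lt_one hs]; exact hlt
  have k2 : 0 < -(Real.cos ψ / Real.sin ψ) := by
    rw [← neg_div]; exact div_pos (by linarith) hs
  refine ⟨hs, ?_, ?_⟩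
  · rw [e]; exact Real.arccos_pos.2 k1
  · rw [e, Real.cos_arccos (by linarith) k1.le]
    field_simp

lemma tendsto_Cpsi : Tendsto Cpsi (nhdsWithin (3 * Real.pi / 4) (Set.Iio (3 * Real.pi / 4)))
      (nhdsWithin 0 (Set.Ioi 0)) := by
  have hpi := Real.pi_pos
  have hm : Ioo (Real.pi / 2) (3 * Real.pi / 4) ∈
      nhdsWithin (3 * Real.pi / 4) (Set.Iio (3 * Real.pi / 4)) :=
    Ioo_mem_nhdsLT (by linarith)
  refine tendsto_nhdsWithin_iff.2 ⟨?_, ?_⟩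
  · have hs : Real.sin (3 * Real.pi / 4) = √2 / 2 := by
      rw [show 3 * Real.pi / 4 = Real.pi - Real.pi / 4 by ring, Real.sin_pi_sub,
        Real.sin_pi_div_four]
    have hc : Real.cos (3 * Real.pi / 4) = -(√2 / 2) := by
      rw [show 3 * Real.pi / 4 = Real.pi - Real.pi / 4 by ring, Real.cos_pi_sub,
        Real.cos_pi_div_four]
    have hne : √2 / 2 ≠ 0 := by positivity
    have hcont : ContinuousAt (fun ψ => Real.arccos (-(Real.cos ψ / Real.sin ψ)))
        (3 * Real.pi / 4) := by
      refine Real.continuous_arccos.continuousAt.comp ?_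
      refine (Real.continuous_cos.continuousAt.div Real.continuous_sin.continuousAt ?_).neg
      rw [hs]; exact hne
    have := hcont.tendsto
    rw [hs, hc, neg_div, div_self hne, neg_neg, Real.arccos_one] at this
    refine (this.mono_left nhdsWithin_le_nhds).congr' ?_
    filter_upwards [hm] with ψ hψ
    rw [Cpsi, if_neg (by linarith [hψ.1])]
  · filter_upwards [hm] with ψ hψ
    exact (psi_facts ψ hψ.1 hψ.2).2.1

lemma calF_two (N : ℕ) (ψ : ℝ) (h : Real.cos ψ = - Real.sin ψ * Real.cos (Cpsi ψ)) :
    calF N 2 ψ = Real.sin ψ ^ 2 / (2 * Real.pi) *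
      ∫ θ in (0:ℝ)..Cpsi ψ, Real.cos (N * θ) * (Real.cos θ - Real.cos (Cpsi ψ)) ^ 2 := by
  have hG : Real.Gamma (2 + 1) = 2 := by
    have := Real.Gamma_nat_eq_factorial 2
    norm_num at this ⊢
  have e : (fun θ : ℝ => Real.cos (N * θ) * (Real.cos ψ + Real.sin ψ * Real.cos θ) ^ (2:ℝ))
    = fun θ => Real.sin ψ ^ 2 *
      (Real.cos (N * θ) * (Real.cos θ - Real.cos (Cpsi ψ)) ^ 2) := by
    ext θ
    rw [Real.rpow_two, h]
    ring
  rw [calF, e, intervalIntegral.integral_const_mul, hG]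
  ring

lemma calF_one (N : ℕ) (ψ : ℝ) (h : Real.cos ψ = - Real.sin ψ * Real.cos (Cpsi ψ)) :
    calF N 1 ψ = Real.sin ψ / Real.pi *
      ∫ θ in (0:ℝ)..Cpsi ψ, Real.cos (N * θ) * (Real.cos θ - Real.cos (Cpsi ψ)) := by
  have hG : Real.Gamma (1 + 1) = 1 := by
    norm_num
  have e : (fun θ : ℝ => Real.cos (N * θ) * (Real.cos ψ + Real.sin ψ * Real.cos θ) ^ (1:ℝ))
    = fun θ => Real.sin ψ *
      (Real.cos (N * θ) * (Real.cos θ - Real.cos (Cpsi ψ))) := by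
    ext θ
    rw [Real.rpow_one, h]
    ring
  rw [calF, e, intervalIntegral.integral_const_mul, hG]
  ring

lemma calF_eqs (ψ : ℝ) (h : Real.cos ψ = - Real.sin ψ * Real.cos (Cpsi ψ)) :
    calF 0 2 ψ = Real.sin ψ ^ 2 / (2 * Real.pi) *
      (∫ θ in (0:ℝ)..Cpsi ψ, (Real.cos θ - Real.cos (Cpsi ψ)) ^ 2) ∧
    calF 1 2 ψ = calF 0 2 ψ - Real.sin ψ ^ 2 / (2 * Real.pi) *
      (∫ θ in (0:ℝ)..Cpsi ψ, (1 - Real.cos θ) * (Real.cos θ - Real.cos (Cpsi ψ)) ^ 2) ∧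
    calF 2 2 ψ = calF 0 2 ψ - 2 * (Real.sin ψ ^ 2 / (2 * Real.pi) *
      (∫ θ in (0:ℝ)..Cpsi ψ, Real.sin θ ^ 2 * (Real.cos θ - Real.cos (Cpsi ψ)) ^ 2)) ∧
    calF 0 1 ψ + calF 2 1 ψ = 2 * (Real.sin ψ / Real.pi *
      (∫ θ in (0:ℝ)..Cpsi ψ, Real.cos θ ^ 2 * (Real.cos θ - Real.cos (Cpsi ψ)))) ∧
    calF 0 1 ψ - calF 2 1 ψ = 2 * (Real.sin ψ / Real.pi *
      (∫ θ in (0:ℝ)..Cpsi ψ, Real.sin θ ^ 2 * (Real.cos θ - Real.cos (Cpsi ψ)))) := by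
  simp only [calF_two _ ψ h, calF_one _ ψ h]
  generalize Cpsi ψ = C
  refine ⟨by simp, ?_, ?_, ?_, ?_⟩
  · rw [← mul_sub, ← intervalIntegral.integral_sub]
    · congr 2; ext θ; push_cast; simp; ring
    all_goals exact Continuous.intervalIntegrable (by fun_prop) _ _
  · rw [mul_left_comm, ← mul_sub, ← intervalIntegral.integral_const_mul (2:ℝ),
      ← intervalIntegral.integral_sub]
    · congr 2; ext θ; push_cast; rw [Real.cos_two_mul, Real.sin_sq]; simp; ring
    all_goals exact Continuous.intervalIntegrable (by fun_prop) _ _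
  · rw [mul_left_comm, ← mul_add, ← intervalIntegral.integral_const_mul (2:ℝ),
      ← intervalIntegral.integral_add]
    · congr 2; ext θ; push_cast; rw [Real.cos_two_mul]; simp; ring
    all_goals exact Continuous.intervalIntegrable (by fun_prop) _ _
  · rw [mul_left_comm, ← mul_sub, ← intervalIntegral.integral_const_mul (2:ℝ),
      ← intervalIntegral.integral_sub]
    · congr 2; ext θ; push_cast; rw [Real.cos_two_mul, Real.sin_sq]; simp; ring
    all_goals exact Continuous.intervalIntegrable (by fun_prop) _ _

lemma I_pos : ∀ᶠ C in nhdsWithin (0:ℝ) (Ioi 0),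
    0 < ∫ θ in (0:ℝ)..C, (Real.cos θ - Real.cos C) ^ 2 := by
  have hsq : Tendsto (fun C : ℝ => C ^ 2) (nhdsWithin 0 (Ioi 0)) (nhds 0) := by
    have := (continuous_pow 2 : Continuous (fun C : ℝ => C ^ 2)).tendsto 0
    rw [zero_pow two_ne_zero] at this
    exact this.mono_left nhdsWithin_le_nhds
  have h := asI.trans_tendsto hsq
  filter_upwards [h.eventually (lt_mem_nhds (show (-1/15 : ℝ) < 0 by norm_num)),
    self_mem_nhdsWithin] with C hC hC0
  have hC0 : 0 < C := hC0
  have : 0 < (∫ θ in (0:ℝ)..C, (Real.cos θ - Real.cos C) ^ 2) / C ^ 5 := by linarith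
  exact (div_pos_iff_of_pos_right (by positivity)).1 this

/-- algebra for the square-root quotient -/
lemma sqrt_alg (s I X C : ℝ) (hs : 0 < s) (hI : 0 < I) (hC : 0 < C) :
    2 * (s / Real.pi * X) / (2 * √(2 * (s ^ 2 / (2 * Real.pi) * I)))
      = X / C ^ ((5:ℝ) / 2) * (√(Real.pi * (I / C ^ 5)))⁻¹ := by
  have hpi := Real.pi_pos
  have e1 : √(2 * (s ^ 2 / (2 * Real.pi) * I)) = s / Real.pi * √(Real.pi * I) := by
    rw [show 2 * (s ^ 2 / (2 * Real.pi) * I) = (s / Real.pi) ^ 2 * (Real.pi * I) by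
      field_simp, Real.sqrt_mul (by positivity), Real.sqrt_sq (by positivity)]
  have e2 : √(Real.pi * (I / C ^ 5)) = √(Real.pi * I) / C ^ ((5:ℝ) / 2) := by
    rw [← mul_div_assoc, Real.sqrt_div (by positivity)]
    congr 1
    rw [Real.sqrt_eq_rpow, ← Real.rpow_natCast, ← Real.rpow_mul hC.le]
    norm_num
  have h1 : 0 < √(Real.pi * I) := by positivity
  have h2 : 0 < C ^ ((5:ℝ) / 2) := by positivity
  rw [e1, e2]
  field_simp

lemma inv_sqrt_diff : DifferentiableAt ℝ (fun g : ℝ => (√(Real.pi * g))⁻¹) (2 / 15) := by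
  have : 0 < Real.pi * (2 / 15) := by positivity
  refine DifferentiableAt.inv ?_ (Real.sqrt_ne_zero'.2 this)
  exact DifferentiableAt.sqrt (by fun_prop) this.ne'

end helpers

/-- As `ψ → (3π/4)⁻` (so that `C = C(ψ) = arccos(-cot ψ) → 0⁺`):
`𝓕₁²/𝓕₀² = 1 - C²/14 + O(C⁴)`, `(𝓕₀²+𝓕₂²)/(2𝓕₀²) = 1 - C²/7 + O(C⁴)`,
`(𝓕₀¹+𝓕₂¹)/(2√(2𝓕₀²)) = (√5/√(6π)) C^{1/2} + O(C^{5/2})`, and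
`(𝓕₀¹-𝓕₂¹)/(2√(2𝓕₀²)) = (1/√(30π)) C^{5/2} + O(C^{9/2})`. -/
theorem calF_ratio_expansion_collimation :
    Tendsto Cpsi (nhdsWithin (3 * Real.pi / 4) (Set.Iio (3 * Real.pi / 4)))
      (nhdsWithin 0 (Set.Ioi 0)) ∧
    ((fun ψ => calF 1 2 ψ / calF 0 2 ψ - (1 - Cpsi ψ ^ 2 / 14))
      =O[nhdsWithin (3 * Real.pi / 4) (Set.Iio (3 * Real.pi / 4))]
        fun ψ => Cpsi ψ ^ 4) ∧
    ((fun ψ => (calF 0 2 ψ + calF 2 2 ψ) / (2 * calF 0 2 ψ) - (1 - Cpsi ψ ^ 2 / 7))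
      =O[nhdsWithin (3 * Real.pi / 4) (Set.Iio (3 * Real.pi / 4))]
        fun ψ => Cpsi ψ ^ 4) ∧
    ((fun ψ => (calF 0 1 ψ + calF 2 1 ψ) / (2 * Real.sqrt (2 * calF 0 2 ψ))
        - Real.sqrt 5 / Real.sqrt (6 * Real.pi) * Cpsi ψ ^ ((1 : ℝ) / 2))
      =O[nhdsWithin (3 * Real.pi / 4) (Set.Iio (3 * Real.pi / 4))]
        fun ψ => Cpsi ψ ^ ((5 : ℝ) / 2)) ∧
    ((fun ψ => (calF 0 1 ψ - calF 2 1 ψ) / (2 * Real.sqrt (2 * calF 0 2 ψ))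
        - 1 / Real.sqrt (30 * Real.pi) * Cpsi ψ ^ ((5 : ℝ) / 2))
      =O[nhdsWithin (3 * Real.pi / 4) (Set.Iio (3 * Real.pi / 4))]
        fun ψ => Cpsi ψ ^ ((9 : ℝ) / 2)) := by
  have hT := tendsto_Cpsi
  have hpi := Real.pi_pos
  have hm : Ioo (Real.pi / 2) (3 * Real.pi / 4) ∈
      nhdsWithin (3 * Real.pi / 4) (Set.Iio (3 * Real.pi / 4)) :=
    Ioo_mem_nhdsLT (by linarith)
  have hIp := hT.eventually I_pos
  have hinv : DifferentiableAt ℝ (fun g : ℝ => g⁻¹) (2 / 15) := differentiableAt_inv (by norm_num)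
  refine ⟨hT, ?_, ?_, ?_, ?_⟩
  · have h := (aux_mul _ _ _ _ _ nhdsWithin_le_nhds asA asI hinv).comp_tendsto hT
    have h' := (((isBigO_refl (fun ψ => Cpsi ψ ^ 2) _).mul h).neg_left)
    refine h'.congr' ?_ (Eventually.of_forall fun ψ => by simp only [Function.comp]; ring)
    filter_upwards [hm, hIp] with ψ hψ hI
    obtain ⟨hs, hC, hc⟩ := psi_facts ψ hψ.1 hψ.2
    obtain ⟨e1, e2, -⟩ := calF_eqs ψ hc
    rw [e2, e1]
    simp only [Function.comp]
    generalize (∫ θ in (0:ℝ)..Cpsi ψ, (Real.cos θ - Real.cos (Cpsi ψ)) ^ 2) = I at *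
    field_simp
    ring
  · have h := (aux_mul _ _ _ _ _ nhdsWithin_le_nhds asB asI hinv).comp_tendsto hT
    have h' := (((isBigO_refl (fun ψ => Cpsi ψ ^ 2) _).mul h).neg_left)
    refine h'.congr' ?_ (Eventually.of_forall fun ψ => by simp only [Function.comp]; ring)
    filter_upwards [hm, hIp] with ψ hψ hI
    obtain ⟨hs, hC, hc⟩ := psi_facts ψ hψ.1 hψ.2
    obtain ⟨e1, -, e2, -⟩ := calF_eqs ψ hc
    rw [e2, e1]
    simp only [Function.comp]
    generalize (∫ θ in (0:ℝ)..Cpsi ψ, (Real.cos θ - Real.cos (Cpsi ψ)) ^ 2) = I at *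
    field_simp
    ring
  · have h := (aux_mul _ _ _ _ _ nhdsWithin_le_nhds asD asI inv_sqrt_diff).comp_tendsto hT
    have h' := (isBigO_refl (fun ψ => Cpsi ψ ^ ((1:ℝ) / 2)) _).mul h
    refine h'.congr' ?_ ?_
    · filter_upwards [hm, hIp] with ψ hψ hI
      obtain ⟨hs, hC, hc⟩ := psi_facts ψ hψ.1 hψ.2
      obtain ⟨e1, -, -, e2, -⟩ := calF_eqs ψ hc
      rw [e2, e1, sqrt_alg _ _ _ _ hs hI hC]
      simp only [Function.comp]
      have k : (1 / 3 : ℝ) * (√(Real.pi * (2 / 15)))⁻¹ = √5 / √(6 * Real.pi) := by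
        rw [← Real.sqrt_inv, ← Real.sqrt_div (by norm_num),
          show (1/3:ℝ) = √(1 / 9) by rw [eq_comm, Real.sqrt_eq_iff_mul_self_eq] <;> norm_num,
          ← Real.sqrt_mul (by norm_num)]
        congr 1
        field_simp
        norm_num
      have k2 : Cpsi ψ ^ 3 = Cpsi ψ ^ ((1:ℝ) / 2) * Cpsi ψ ^ ((5:ℝ) / 2) := by
        rw [← Real.rpow_add hC, ← Real.rpow_natCast]; norm_num
      have p1 : 0 < Cpsi ψ ^ ((1:ℝ) / 2) := by positivity
      rw [k, k2]
      generalize (√(Real.pi * _))⁻¹ = R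
      field_simp
    · filter_upwards [hm] with ψ hψ
      obtain ⟨hs, hC, hc⟩ := psi_facts ψ hψ.1 hψ.2
      simp only [Function.comp]
      rw [← Real.rpow_natCast, ← Real.rpow_add hC]; norm_num
  · have h := (aux_mul _ _ _ _ _ nhdsWithin_le_nhds asE asI inv_sqrt_diff).comp_tendsto hT
    have h' := (isBigO_refl (fun ψ => Cpsi ψ ^ ((5:ℝ) / 2)) _).mul h
    refine h'.congr' ?_ ?_
    · filter_upwards [hm, hIp] with ψ hψ hI
      obtain ⟨hs, hC, hc⟩ := psi_facts ψ hψ.1 hψ.2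
      obtain ⟨e1, -, -, -, e2⟩ := calF_eqs ψ hc
      rw [e2, e1, sqrt_alg _ _ _ _ hs hI hC]
      simp only [Function.comp]
      have k : (1 / 15 : ℝ) * (√(Real.pi * (2 / 15)))⁻¹ = 1 / √(30 * Real.pi) := by
        rw [← Real.sqrt_inv, one_div (√(30 * Real.pi)), ← Real.sqrt_inv,
          show (1/15:ℝ) = √(1 / 225) by rw [eq_comm, Real.sqrt_eq_iff_mul_self_eq] <;> norm_num,
          ← Real.sqrt_mul (by norm_num)]
        congr 1
        field_simp
        norm_num
      have p1 : 0 < Cpsi ψ ^ ((5:ℝ) / 2) := by positivity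
      have k2 : Cpsi ψ ^ 5 = Cpsi ψ ^ ((5:ℝ) / 2) * Cpsi ψ ^ ((5:ℝ) / 2) := by
        rw [← Real.rpow_add hC, ← Real.rpow_natCast]; norm_num
      rw [k]
      generalize (√(Real.pi * _))⁻¹ = R
      rw [k2]
      field_simp
    · filter_upwards [hm] with ψ hψ
      obtain ⟨hs, hC, hc⟩ := psi_facts ψ hψ.1 hψ.2
      simp only [Function.comp]
      rw [← Real.rpow_natCast, ← Real.rpow_add hC]; norm_num
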